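/- arXiv:math/9903175 — 2 statements merged into one kernel-verified Lean document; each statement's English description precedes it below -/
import Mathlib

section
/- Let V be a finite-dimensional complex vector space and G ⊆ GL(V) a finite subgroup, acting in the induced way on the algebra of polynomial functions on V. If the subalgebra of G-invariant polynomial functions is isomorphic, as a graded ℂ-algebra, to a polynomial algebra (equivalently, the quotient V/G is smooth), then G is generated by complex reflections. -/
/-!
Let `S` be the ring of polynomial functions on `V`, `R = S^G` and `H ≤ G` the subgroup generated by
the reflections. Since `R` is a polynomial ring in `m ≤ dim V` variables, its residue field `k` at
the origin has projective dimension at most `m`. The coordinates of `V` form a regular sequence in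
`S` and are nilpotent modulo the maximal ideal of `R`, so dividing them out one at a time deduces
`Ext¹_R(S, k) = 0` from `Ext^{1 + dim V}_R(k, k) = 0`. Averaging over `H` makes `S^H` a direct
summand of `S`; hence `Ext¹_R(S^H, k) = 0` and `S^H` is free over `R` near the origin, with a basis
`b` indexed by `G ⧸ H`.

A group element acting trivially modulo a prime element of `S` fixes a hyperplane, so `R ⊆ S^H` is
unramified in codimension one: the determinant of the conjugates `g • bᵢ`, `g ∈ G ⧸ H`, lies in no
prime ideal of height one near the origin, and is therefore a unit at the origin (purity of the
branch locus). But `G` acts trivially on the residue field there, so all rows of this matrix agree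
modulo the maximal ideal, which forces `G = H`.
-/

section ExtSlicing

open CategoryTheory Abelian RingTheory.Sequence

open scoped Pointwise

universe u

variable {R : Type u} [CommRing R]

lemma smul_ext_eq_zero_of_mem_annihilator {X L : ModuleCat.{u} R} {r : R}
    (hr : r ∈ Module.annihilator R L) {i : ℕ} (e : Ext X L i) : r • e = 0 := by
  have hr0 : r • 𝟙 L = 0 := by
    ext l
    exact Module.mem_annihilator.mp hr l
  rw [← Ext.comp_mk₀_id e, ← Ext.comp_smul, ← Ext.mk₀_smul, hr0, Ext.mk₀_zero, Ext.comp_zero]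

lemma subsingleton_ext_of_comp_eq_smul {L M N : ModuleCat.{u} R} {r : R} (f : N ⟶ M) (g : M ⟶ N)
    (hfg : f ≫ g = r • 𝟙 N) (hr : r - 1 ∈ Module.annihilator R L) {i : ℕ}
    (h : Subsingleton (Ext M L i)) : Subsingleton (Ext N L i) := by
  refine subsingleton_of_forall_eq 0 fun e ↦ ?_
  have hre : r • e = e := by
    simpa [sub_smul, sub_eq_zero] using smul_ext_eq_zero_of_mem_annihilator hr e
  calc e = (Ext.mk₀ (r • 𝟙 N)).comp e (zero_add i) := by
        rw [Ext.mk₀_smul, Ext.smul_comp, Ext.mk₀_id_comp, hre]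
    _ = (Ext.mk₀ f).comp ((Ext.mk₀ g).comp e (zero_add i)) (zero_add i) := by
        rw [← hfg, ← Ext.mk₀_comp_mk₀, Ext.comp_assoc_of_second_deg_zero]
    _ = 0 := by rw [Subsingleton.elim ((Ext.mk₀ g).comp e _) 0, Ext.comp_zero]

lemma subsingleton_ext_of_linearEquiv {L : ModuleCat.{u} R} {M N : Type u} [AddCommGroup M]
    [Module R M] [AddCommGroup N] [Module R N] (e : M ≃ₗ[R] N) {i : ℕ}
    (h : Subsingleton (Ext (ModuleCat.of R M) L i)) :
    Subsingleton (Ext (ModuleCat.of R N) L i) :=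
  subsingleton_ext_of_comp_eq_smul (r := 1) e.toModuleIso.inv e.toModuleIso.hom
    (by rw [e.toModuleIso.inv_hom_id, one_smul]) (by simp) h

variable {S : Type u} [CommRing S] [Algebra R S] {M : Type u} [AddCommGroup M] [Module R M]
  [Module S M] [IsScalarTower R S M]

variable (S M) in
/-- The `S`-module structure on `Ext_R(M, L)` coming from an `S`-module structure on `M`, recorded
as a ring homomorphism to avoid a competing additive structure on `Ext`. -/
noncomputable def extLsmul (L : ModuleCat.{u} R) (i : ℕ) :
    S →+* AddMonoid.End (Ext (ModuleCat.of R M) L i) where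
  toFun s := AddMonoidHom.mk'
    (fun e ↦ (Ext.mk₀ (ModuleCat.ofHom (Algebra.lsmul R R M s))).comp e (zero_add i))
    (Ext.comp_add _ · · _)
  map_zero' := AddMonoidHom.ext fun e ↦ by
    change (Ext.mk₀ (ModuleCat.ofHom (Algebra.lsmul R R M 0))).comp e (zero_add i) = 0
    rw [map_zero, ModuleCat.ofHom_zero, Ext.mk₀_zero, Ext.zero_comp]
  map_one' := AddMonoidHom.ext fun e ↦ by
    change (Ext.mk₀ (ModuleCat.ofHom (Algebra.lsmul R R M 1))).comp e (zero_add i) = e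
    rw [map_one]
    exact Ext.mk₀_id_comp e
  map_add' s t := AddMonoidHom.ext fun e ↦ by
    change (Ext.mk₀ (ModuleCat.ofHom (Algebra.lsmul R R M (s + t)))).comp e (zero_add i) = _
    rw [map_add, ModuleCat.ofHom_add, Ext.mk₀_add, Ext.add_comp]
    rfl
  map_mul' s t := AddMonoidHom.ext fun e ↦ by
    change (Ext.mk₀ (ModuleCat.ofHom (Algebra.lsmul R R M (s * t)))).comp e (zero_add i) = _
    rw [mul_comm, map_mul, Module.End.mul_eq_comp, ModuleCat.ofHom_comp, ← Ext.mk₀_comp_mk₀,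
      Ext.comp_assoc_of_second_deg_zero]
    rfl

lemma map_annihilator_le_ker_extLsmul (L : ModuleCat.{u} R) (i : ℕ) :
    (Module.annihilator R L).map (algebraMap R S) ≤ RingHom.ker (extLsmul S M L i) := by
  refine Ideal.map_le_iff_le_comap.mpr fun r hr ↦ ?_
  rw [Ideal.mem_comap, RingHom.mem_ker]
  refine AddMonoidHom.ext fun e ↦ ?_
  have hr' : ModuleCat.ofHom (Algebra.lsmul R R M (algebraMap R S r)) =
      r • 𝟙 (ModuleCat.of R M) := by
    ext x
    simp
  change (Ext.mk₀ (ModuleCat.ofHom (Algebra.lsmul R R M (algebraMap R S r)))).comp e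
    (zero_add i) = 0
  rw [hr', Ext.mk₀_smul, Ext.smul_comp, Ext.mk₀_id_comp, smul_ext_eq_zero_of_mem_annihilator hr]

variable (R M) in
/-- The complex `M → M → M ⧸ s M` of `R`-modules, for a scalar `s` in an `R`-algebra acting
on `M`. -/
noncomputable abbrev lsmulShortComplex (s : S) : ShortComplex (ModuleCat.{u} R) :=
  ModuleCat.shortComplexOfCompEqZero (Algebra.lsmul R R M s)
    ((s • (⊤ : Submodule S M)).mkQ.restrictScalars R)
    (LinearMap.ext fun x ↦ (LinearMap.exact_lsmul_mkQ_smul_top M s).apply_apply_eq_zero x)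

lemma shortExact_lsmulShortComplex {s : S} (hs : IsSMulRegular M s) :
    (lsmulShortComplex R M s).ShortExact where
  exact := (ShortComplex.ShortExact.moduleCat_exact_iff_function_exact _).mpr
    (LinearMap.exact_lsmul_mkQ_smul_top M s)
  mono_f := (ModuleCat.mono_iff_injective _).mpr hs
  epi_g := (ModuleCat.epi_iff_surjective _).mpr (Submodule.mkQ_surjective (s • (⊤ : Submodule S M)))

lemma subsingleton_ext_of_quotSMulTop {L : ModuleCat.{u} R} {s : S} (hs : IsSMulRegular M s)
    (hsL : s ∈ ((Module.annihilator R L).map (algebraMap R S)).radical) {i : ℕ}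
    (h : Subsingleton (Ext (ModuleCat.of R (QuotSMulTop s M)) L (i + 1))) :
    Subsingleton (Ext (ModuleCat.of R M) L i) := by
  obtain ⟨N, hN⟩ := hsL
  have hsurj : Function.Surjective (extLsmul S M L i s) := fun e ↦
    Ext.contravariant_sequence_exact₁ (shortExact_lsmulShortComplex hs) L e (add_comm 1 i)
      (Subsingleton.elim _ _)
  refine subsingleton_of_forall_eq 0 fun e ↦ ?_
  obtain ⟨e', rfl⟩ := hsurj.iterate N e
  rw [← AddMonoid.End.coe_pow, ← map_pow,
    RingHom.mem_ker.mp (map_annihilator_le_ker_extLsmul L i hN), AddMonoid.End.zero_apply]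

lemma subsingleton_ext_of_isWeaklyRegular {L : ModuleCat.{u} R} {rs : List S}
    (hrs : IsWeaklyRegular M rs)
    (hL : ∀ s ∈ rs, s ∈ ((Module.annihilator R L).map (algebraMap R S)).radical) {i : ℕ}
    (h : Subsingleton (Ext (ModuleCat.of R (M ⧸ (Ideal.ofList rs • ⊤ : Submodule S M))) L
      (i + rs.length))) :
    Subsingleton (Ext (ModuleCat.of R M) L i) := by
  induction rs generalizing M i with
  | nil =>
    refine subsingleton_ext_of_linearEquiv
      ((Submodule.quotEquivOfEqBot _ ?_).restrictScalars R) h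
    rw [Ideal.ofList_nil, Submodule.bot_smul]
  | cons s rs ih =>
    rw [isWeaklyRegular_cons_iff] at hrs
    refine subsingleton_ext_of_quotSMulTop hrs.1 (hL s List.mem_cons_self)
      (ih hrs.2 (fun t ht ↦ hL t (List.mem_cons_of_mem s ht)) ?_)
    rw [add_assoc, add_comm 1]
    exact subsingleton_ext_of_linearEquiv
      ((Submodule.quotOfListConsSMulTopEquivQuotSMulTopInner M s rs).restrictScalars R) h

lemma hasProjectiveDimensionLT_quotient_of_isWeaklyRegular {rs : List S}
    (hrs : IsWeaklyRegular M rs) {d : ℕ} (hM : HasProjectiveDimensionLT (ModuleCat.of R M) d) :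
    HasProjectiveDimensionLT
      (ModuleCat.of R (M ⧸ (Ideal.ofList rs • ⊤ : Submodule S M))) (d + rs.length) := by
  induction rs generalizing M d with
  | nil =>
    refine hasProjectiveDimensionLT_of_iso
      ((Submodule.quotEquivOfEqBot _ ?_).symm.restrictScalars R).toModuleIso d
    rw [Ideal.ofList_nil, Submodule.bot_smul]
  | cons s rs ih =>
    rw [isWeaklyRegular_cons_iff] at hrs
    have hd := ih hrs.2 ((shortExact_lsmulShortComplex (R := R) hrs.1).hasProjectiveDimensionLT_X₃ d
      hM (hasProjectiveDimensionLT_of_ge _ d (d + 1) d.le_succ))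
    rw [add_assoc, add_comm 1] at hd
    exact hasProjectiveDimensionLT_of_iso
      ((Submodule.quotOfListConsSMulTopEquivQuotSMulTopInner M s rs).symm.restrictScalars
        R).toModuleIso _

end ExtSlicing

section CoordinateSequence

open CategoryTheory Abelian MvPolynomial RingTheory.Sequence

universe u

section

variable {σ A : Type*} [CommRing A]

lemma ker_constantCoeff_eq_idealOfVars :
    RingHom.ker (constantCoeff : MvPolynomial σ A →+* A) = idealOfVars σ A := by
  ext p
  rw [idealOfVars, ← Set.image_univ, mem_ideal_span_X_image, RingHom.mem_ker, constantCoeff_eq,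
    ← notMem_support_iff]
  have hex (d : σ →₀ ℕ) : (∃ i ∈ Set.univ, d i ≠ 0) ↔ d ≠ 0 := by simp [Finsupp.ext_iff]
  simp only [hex]
  exact ⟨fun h d hd hd0 ↦ h (hd0 ▸ hd), fun h h0 ↦ h 0 h0 rfl⟩

lemma isSMulRegular_quotient_span_X_image {s : Set σ} {j : σ} (hj : j ∉ s) :
    IsSMulRegular (MvPolynomial σ A ⧸ Ideal.span (X '' s : Set (MvPolynomial σ A)))
      (X j : MvPolynomial σ A) := by
  refine (isSMulRegular_quotient_iff_mem_of_smul_mem _ _).mpr fun p hp ↦ ?_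
  rw [mem_ideal_span_X_image] at hp ⊢
  intro d hd
  obtain ⟨i, hi, hdi⟩ := hp (Finsupp.single j 1 + d) (by
    rwa [smul_eq_mul, mem_support_iff, coeff_X_mul, ← mem_support_iff])
  have hij : j ≠ i := fun h ↦ hj (h ▸ hi)
  exact ⟨i, hi, by simpa [Finsupp.single_eq_of_ne' hij] using hdi⟩

lemma isWeaklyRegular_map_X {l : List σ} (hl : l.Nodup) :
    IsWeaklyRegular (MvPolynomial σ A) (l.map (X : σ → MvPolynomial σ A)) := by
  refine ⟨fun i hi ↦ ?_⟩
  have hspan : Ideal.ofList ((l.map (X : σ → MvPolynomial σ A)).take i) •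
      (⊤ : Ideal (MvPolynomial σ A)) = Ideal.span (X '' {j | j ∈ l.take i}) := by
    rw [smul_eq_mul, Ideal.mul_top, ← List.map_take, Ideal.ofList]
    exact congrArg Ideal.span (Set.ext fun p ↦ List.mem_map)
  rw [List.getElem_map, hspan]
  refine isSMulRegular_quotient_span_X_image fun hmem ↦ ?_
  obtain ⟨j, hj, hji⟩ := List.mem_take_iff_getElem.mp hmem
  exact (lt_min_iff.mp hj).1.ne (hl.getElem_inj_iff.mp hji)

lemma ofList_map_X_finRange_smul_top (n : ℕ) :
    Ideal.ofList ((List.finRange n).map (X : Fin n → MvPolynomial (Fin n) A)) •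
      (⊤ : Ideal (MvPolynomial (Fin n) A)) = idealOfVars (Fin n) A := by
  rw [smul_eq_mul, Ideal.mul_top, Ideal.ofList]
  congr 1
  ext p
  simp

end

section

variable {A : Type u} [CommRing A]

lemma hasProjectiveDimensionLT_quotient_idealOfVars (n : ℕ) :
    HasProjectiveDimensionLT (ModuleCat.of (MvPolynomial (Fin n) A)
      (MvPolynomial (Fin n) A ⧸ idealOfVars (Fin n) A)) (1 + n) := by
  have h := hasProjectiveDimensionLT_quotient_of_isWeaklyRegular (R := MvPolynomial (Fin n) A)
    (isWeaklyRegular_map_X (A := A) (List.nodup_finRange n)) (d := 1) inferInstance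
  rwa [ofList_map_X_finRange_smul_top, List.length_map, List.length_finRange] at h

variable {m n : ℕ} [Algebra (MvPolynomial (Fin m) A) (MvPolynomial (Fin n) A)]

lemma nonempty_quotient_idealOfVars_linearEquiv
    (hcc : ∀ r : MvPolynomial (Fin m) A,
      constantCoeff (algebraMap _ (MvPolynomial (Fin n) A) r) = constantCoeff r) :
    Nonempty ((MvPolynomial (Fin m) A ⧸ idealOfVars (Fin m) A) ≃ₗ[MvPolynomial (Fin m) A]
      (MvPolynomial (Fin n) A ⧸ idealOfVars (Fin n) A)) := by
  let π := (Ideal.Quotient.mkₐ (MvPolynomial (Fin m) A) (idealOfVars (Fin n) A)).toLinearMap ∘ₗ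
    Algebra.linearMap _ _
  have hker : LinearMap.ker π = idealOfVars (Fin m) A := by
    ext r
    change Ideal.Quotient.mk _ (algebraMap _ _ r) = 0 ↔ _
    rw [Ideal.Quotient.eq_zero_iff_mem, ← ker_constantCoeff_eq_idealOfVars,
      ← ker_constantCoeff_eq_idealOfVars, RingHom.mem_ker, RingHom.mem_ker, hcc]
  have hsurj : Function.Surjective π := fun y ↦ by
    obtain ⟨s, rfl⟩ := Ideal.Quotient.mk_surjective y
    refine ⟨C (constantCoeff s), Ideal.Quotient.eq.mpr ?_⟩
    rw [← ker_constantCoeff_eq_idealOfVars, RingHom.mem_ker, map_sub, Algebra.linearMap_apply,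
      hcc, constantCoeff_C, sub_self]
  exact ⟨Submodule.quotEquivOfEq _ _ hker.symm ≪≫ₗ π.quotKerEquivOfSurjective hsurj⟩

lemma subsingleton_ext_quotient_idealOfVars (hmn : m ≤ n)
    (hcc : ∀ r : MvPolynomial (Fin m) A,
      constantCoeff (algebraMap _ (MvPolynomial (Fin n) A) r) = constantCoeff r)
    (hrad : ∀ j, (X j : MvPolynomial (Fin n) A) ∈
      ((idealOfVars (Fin m) A).map (algebraMap _ (MvPolynomial (Fin n) A))).radical) :
    Subsingleton (Ext (ModuleCat.of (MvPolynomial (Fin m) A) (MvPolynomial (Fin n) A))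
      (ModuleCat.of _ (MvPolynomial (Fin m) A ⧸ idealOfVars (Fin m) A)) 1) := by
  refine subsingleton_ext_of_isWeaklyRegular (isWeaklyRegular_map_X (List.nodup_finRange n))
    (fun s hs ↦ ?_) ?_
  · obtain ⟨j, -, rfl⟩ := List.mem_map.mp hs
    have hann : Module.annihilator _ (MvPolynomial (Fin m) A ⧸ idealOfVars (Fin m) A) = _ :=
      Ideal.annihilator_quotient
    exact hann.symm ▸ hrad j
  · obtain ⟨e⟩ := nonempty_quotient_idealOfVars_linearEquiv hcc
    rw [ofList_map_X_finRange_smul_top, List.length_map, List.length_finRange]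
    refine subsingleton_ext_of_linearEquiv e ?_
    have := hasProjectiveDimensionLT_quotient_idealOfVars (A := A) m
    exact HasProjectiveDimensionLT.subsingleton _ (1 + m) (1 + n) (by lia) _

end

end CoordinateSequence

section LocalFreeness

open CategoryTheory Abelian

open scoped Pointwise

universe u

section

lemma notMem_of_sub_one_mem {R : Type*} [Ring R] {I : Ideal R} (hI : I ≠ ⊤) {r : R}
    (hr : r - 1 ∈ I) : r ∉ I := fun hrI ↦
  (Ideal.ne_top_iff_one I).mp hI (by simpa using sub_mem hrI hr)

variable {R : Type*} [CommRing R] {I : Ideal R} [I.IsMaximal] {M : Type*} [AddCommGroup M]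
  [Module R M] [Module.Finite R M]

lemma exists_sub_one_mem_smul_eq_zero_of_forall_hom_eq_zero (h : ∀ f : M →ₗ[R] R ⧸ I, f = 0) :
    ∃ r : R, r - 1 ∈ I ∧ ∀ x : M, r • x = 0 := by
  let := Ideal.Quotient.field I
  have htop : (⊤ : Submodule R M) ≤ I • ⊤ := fun x _ ↦ by
    rw [← Submodule.Quotient.mk_eq_zero, ← Module.forall_dual_apply_eq_zero_iff (R ⧸ I)]
    exact fun f ↦ LinearMap.congr_fun (h ((f.restrictScalars R) ∘ₗ Submodule.mkQ _)) x
  obtain ⟨r, hr, hr'⟩ := Submodule.exists_sub_one_mem_and_smul_eq_zero_of_fg_of_le_smul I ⊤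
    Module.Finite.fg_top htop
  exact ⟨r, hr, fun x ↦ hr' x trivial⟩

variable (I M) in
lemma exists_top_le_span_sup_and_forall_mem : ∃ (k : ℕ) (b : Fin k → M),
    (⊤ : Submodule R M) ≤ Submodule.span R (Set.range b) ⊔ I • ⊤ ∧
      ∀ c : Fin k → R, ∑ i, c i • b i = 0 → ∀ i, c i ∈ I := by
  let := Ideal.Quotient.field I
  let β := Module.finBasis (R ⧸ I) (M ⧸ (I • ⊤ : Submodule R M))
  choose b hb using fun i ↦ Submodule.mkQ_surjective (I • ⊤ : Submodule R M) (β i)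
  refine ⟨_, b, fun x _ ↦ ?_, fun c hc i ↦ ?_⟩
  · choose c hc using fun i ↦ Ideal.Quotient.mk_surjective (β.repr (Submodule.Quotient.mk x) i)
    have hx : x - ∑ i, c i • b i ∈ I • (⊤ : Submodule R M) := by
      rw [← Submodule.Quotient.mk_eq_zero, ← Submodule.mkQ_apply, map_sub, map_sum, sub_eq_zero]
      simp only [map_smul, hb]
      refine (β.sum_repr (Submodule.Quotient.mk x)).symm.trans (Finset.sum_congr rfl fun i _ ↦ ?_)
      rw [← hc]
      rfl
    rw [← sub_add_cancel x (∑ i, c i • b i), add_comm]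
    exact Submodule.add_mem_sup (Submodule.sum_smul_mem _ _ fun i _ ↦
      Submodule.subset_span (Set.mem_range_self i)) hx
  · have hβ : ∑ i, Ideal.Quotient.mk I (c i) • β i = 0 := by
      have h := congrArg (I • ⊤ : Submodule R M).mkQ hc
      simp only [map_sum, map_smul, hb, map_zero] at h
      exact h
    exact Ideal.Quotient.eq_zero_iff_mem.mp
      (Fintype.linearIndependent_iff.mp β.linearIndependent _ hβ i)

end

variable {R : Type u} [CommRing R] {I : Ideal R}

lemma hom_ker_eq_zero_of_subsingleton_ext {F N : Type u} [AddCommGroup F] [Module R F]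
    [AddCommGroup N] [Module R N] {φ : F →ₗ[R] N} (hφ : Function.Surjective φ)
    (hker : LinearMap.ker φ ≤ I • ⊤)
    (h : Subsingleton (Ext (ModuleCat.of R N) (ModuleCat.of R (R ⧸ I)) 1))
    (f : LinearMap.ker φ →ₗ[R] R ⧸ I) : f = 0 := by
  obtain ⟨e, he⟩ := Ext.contravariant_sequence_exact₁ (LinearMap.shortExact_shortComplexKer hφ) _
    (Ext.mk₀ (ModuleCat.ofHom f : ModuleCat.of R _ ⟶ ModuleCat.of R (R ⧸ I)))
    (n₁ := 1) rfl (Subsingleton.elim _ _)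
  obtain ⟨g, rfl⟩ := (Ext.mk₀_bijective _ _).2 e
  rw [Ext.mk₀_comp_mk₀, (Ext.mk₀_bijective _ _).1.eq_iff] at he
  have hg : I • (⊤ : Submodule R F) ≤ LinearMap.ker (g.hom : F →ₗ[R] R ⧸ I) :=
    Submodule.smul_le.mpr fun r hr x _ ↦ by
      have hr' : r ∈ Module.annihilator R (R ⧸ I) := Ideal.annihilator_quotient.ge hr
      rw [LinearMap.mem_ker, map_smul]
      exact Module.mem_annihilator.mp hr' _
  ext x
  exact (ConcreteCategory.congr_hom he x).symm.trans (hg (hker x.2))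

lemma subsingleton_ext_submodule_of_smul_top_le {L : ModuleCat.{u} R} {M : Type u}
    [AddCommGroup M] [Module R M] {N : Submodule R M} {r : R}
    (hr : r - 1 ∈ Module.annihilator R L) (hN : r • (⊤ : Submodule R M) ≤ N) {i : ℕ}
    (h : Subsingleton (Ext (ModuleCat.of R M) L i)) :
    Subsingleton (Ext (ModuleCat.of R N) L i) :=
  subsingleton_ext_of_comp_eq_smul (ModuleCat.ofHom N.subtype)
    (ModuleCat.ofHom ((LinearMap.lsmul R M r).codRestrict N fun x ↦
      hN (Submodule.smul_mem_pointwise_smul x r ⊤ trivial))) rfl hr h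

variable [IsDomain R] [IsNoetherianRing R] [I.IsMaximal] {M : Type u} [AddCommGroup M]
  [Module R M]

lemma linearIndependent_of_subsingleton_ext_span {k : ℕ} {b : Fin k → M}
    (hb : ∀ c : Fin k → R, ∑ i, c i • b i = 0 → ∀ i, c i ∈ I)
    (h : Subsingleton (Ext (ModuleCat.of R (Submodule.span R (Set.range b)))
      (ModuleCat.of R (R ⧸ I)) 1)) :
    LinearIndependent R b := by
  let φ := (Fintype.linearCombination R b).rangeRestrict
  have hker : LinearMap.ker φ ≤ I • ⊤ := fun c hc ↦ by
    have hc0 : ∑ i, c i • b i = 0 := congrArg Subtype.val hc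
    rw [pi_eq_sum_univ' c]
    exact Submodule.sum_mem _ fun i _ ↦ Submodule.smul_mem_smul (hb c hc0 i) trivial
  rw [← Fintype.range_linearCombination] at h
  obtain ⟨s, hs, hsker⟩ := exists_sub_one_mem_smul_eq_zero_of_forall_hom_eq_zero
    (hom_ker_eq_zero_of_subsingleton_ext (LinearMap.surjective_rangeRestrict _) hker h)
  have hs0 : s ≠ 0 := fun h0 ↦ notMem_of_sub_one_mem Ideal.IsPrime.ne_top' hs (h0 ▸ I.zero_mem)
  refine Fintype.linearIndependent_iff.mpr fun c hc i ↦ ?_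
  have hsc := congrFun (congrArg Subtype.val (hsker ⟨c, Subtype.ext hc⟩)) i
  exact (mul_eq_zero.mp hsc).resolve_left hs0

lemma exists_linearIndependent_of_subsingleton_ext [Module.Finite R M]
    (h : Subsingleton (Ext (ModuleCat.of R M) (ModuleCat.of R (R ⧸ I)) 1)) :
    ∃ (k : ℕ) (b : Fin k → M), LinearIndependent R b ∧
      ∃ r ∉ I, ∀ x, r • x ∈ Submodule.span R (Set.range b) := by
  obtain ⟨k, b, hspan, hb⟩ := exists_top_le_span_sup_and_forall_mem I M
  obtain ⟨r, hr, hrM⟩ := Submodule.exists_sub_one_mem_and_smul_le_of_fg_of_le_sup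
    Module.Finite.fg_top le_rfl hspan
  have hr' : r - 1 ∈ Module.annihilator R (R ⧸ I) := Ideal.annihilator_quotient.ge hr
  exact ⟨k, b,
    linearIndependent_of_subsingleton_ext_span hb
      (subsingleton_ext_submodule_of_smul_top_le hr' hrM h),
    r, notMem_of_sub_one_mem Ideal.IsPrime.ne_top' hr,
    fun x ↦ hrM (Submodule.smul_mem_pointwise_smul x r ⊤ trivial)⟩

end LocalFreeness

section Dedekind

lemma eq_zero_of_forall_smul_mem_span {R M N ι : Type*} [CommRing R] [AddCommGroup M]
    [Module R M] [AddCommGroup N] [Module R N] {b : ι → M} {r : R}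
    (hr : ∀ x, r • x ∈ Submodule.span R (Set.range b)) (hrN : ∀ y : N, r • y = 0 → y = 0)
    {ψ : M →ₗ[R] N} (hψ : ∀ i, ψ (b i) = 0) : ψ = 0 := by
  have hspan : Submodule.span R (Set.range b) ≤ LinearMap.ker ψ :=
    Submodule.span_le.mpr (Set.range_subset_iff.mpr hψ)
  exact LinearMap.ext fun x ↦ hrN _ ((map_smul ψ r x).symm.trans (hspan (hr x)))

lemma linearIndependent_algHom_apply {R A D ι κ : Type*} [CommRing R] [CommRing A] [Algebra R A]
    [CommRing D] [IsDomain D] [Algebra R D] {b : ι → A} {r : R}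
    (hr : ∀ x, r • x ∈ Submodule.span R (Set.range b)) (hrD : algebraMap R D r ≠ 0)
    {χ : κ → A →ₐ[R] D} (hχ : Function.Injective χ) :
    LinearIndependent D fun q i ↦ χ q (b i) := by
  refine linearIndependent_iff.mpr fun c hc ↦
    linearIndependent_iff.mp ((linearIndependent_toLinearMap R A D).comp χ hχ) c ?_
  refine eq_zero_of_forall_smul_mem_span hr (fun y hy ↦ ?_) fun i ↦ ?_
  · rw [Algebra.smul_def] at hy
    exact (mul_eq_zero.mp hy).resolve_left hrD
  · have hci := congrFun hc i
    simpa [Finsupp.linearCombination_apply, Finsupp.sum] using hci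

end Dedekind

section Invariants

variable {K R S G : Type*} [CommRing S] [Group G] [MulSemiringAction G S] [CommRing R]
  [Algebra R S]

lemma exists_apply_eq_apply_smul [Finite G] {D : Type*} [CommRing D] [IsDomain D]
    {φ₁ φ₂ : S →+* D} (h : ∀ s, (∀ g : G, g • s = s) → φ₁ s = φ₂ s) (t : S) :
    ∃ g : G, φ₁ t = φ₂ (g • t) := by
  have := Fintype.ofFinite G
  have hmap : (MulSemiringAction.charpoly G t).map φ₁ = (MulSemiringAction.charpoly G t).map φ₂ :=
    Polynomial.ext fun j ↦ by
      rw [Polynomial.coeff_map, Polynomial.coeff_map,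
        h _ (MulSemiringAction.smul_coeff_charpoly t j)]
  have hroot : ((MulSemiringAction.charpoly G t).map φ₂).eval (φ₁ t) = 0 := by
    rw [← hmap, Polynomial.eval_map_apply, MulSemiringAction.eval_charpoly, map_zero]
  simp only [MulSemiringAction.charpoly_eq, Polynomial.map_prod, Polynomial.eval_prod,
    Finset.prod_eq_zero_iff, Polynomial.map_sub, Polynomial.map_X, Polynomial.map_C,
    Polynomial.eval_sub, Polynomial.eval_X, Polynomial.eval_C, sub_eq_zero] at hroot
  obtain ⟨g, -, hg⟩ := hroot
  exact ⟨g, hg⟩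

lemma exists_forall_apply_eq_apply_smul [Field K] [Infinite K] [Algebra K S] [SMulCommClass G K S]
    [Finite G] {D : Type*} [CommRing D] [IsDomain D] [Algebra K D] {φ₁ φ₂ : S →ₐ[K] D}
    (h : ∀ s, (∀ g : G, g • s = s) → φ₁ s = φ₂ s) : ∃ g : G, ∀ t, φ₁ t = φ₂ (g • t) := by
  let W (g : G) : Submodule K S :=
    LinearMap.eqLocus φ₁.toLinearMap (φ₂.comp (MulSemiringAction.toAlgHom K S g)).toLinearMap
  obtain ⟨g, hg⟩ : ∃ g, W g = ⊤ := Subspace.exists_eq_top_of_iUnion_eq_univ <|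
    Set.eq_univ_of_forall fun t ↦ Set.mem_iUnion.mpr
      (exists_apply_eq_apply_smul (φ₁ := φ₁.toRingHom) (φ₂ := φ₂.toRingHom) h t)
  exact ⟨g, fun t ↦ (hg ▸ Submodule.mem_top : t ∈ W g)⟩

lemma exists_algebraMap_eq_sum_smul [Fintype G] [Algebra.IsInvariant R S G] (x : S) :
    ∃ t : R, algebraMap R S t = ∑ g : G, g • x :=
  Algebra.IsInvariant.isInvariant (G := G) _ fun g ↦ by
    rw [Finset.smul_sum]
    exact Fintype.sum_bijective _ (Group.mulLeft_bijective g) _ _ fun _ ↦ (mul_smul g _ x).symm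

open scoped Pointwise in
lemma mem_radical_map_comap [Finite G] [SMulCommClass G R S] [Algebra.IsInvariant R S G]
    {Q : Ideal S} {x : S} (hx : ∀ g : G, g • x ∈ Q) :
    x ∈ ((Q.comap (algebraMap R S)).map (algebraMap R S)).radical := by
  have := Algebra.IsInvariant.isIntegral R S G
  rw [Ideal.radical_eq_sInf, Ideal.mem_sInf]
  rintro 𝔭 ⟨hle, h𝔭⟩
  obtain ⟨𝔮, hQ𝔮, h𝔮, h𝔮𝔭⟩ := Ideal.exists_ideal_over_prime_of_isIntegral
    (𝔭.comap (algebraMap R S)) Q (Ideal.map_le_iff_le_comap.mp hle)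
  obtain ⟨g, rfl⟩ := Algebra.IsInvariant.exists_smul_of_under_eq R S G 𝔮 𝔭 h𝔮𝔭
  exact Ideal.mem_pointwise_smul_iff_inv_smul_mem.mpr (hQ𝔮 (hx g⁻¹))

variable [SMulCommClass G R S] (H : Subgroup G)

variable (R S) in
/-- The embedding of the `H`-invariants into `S` by which every element of a given coset `q` of `H`
acts. -/
noncomputable def cosetHom (q : G ⧸ H) : FixedPoints.subalgebra R S H →ₐ[R] S :=
  (MulSemiringAction.toAlgHom R S q.out).comp (FixedPoints.subalgebra R S H).val

variable {H}

lemma cosetHom_mk (g : G) (s : FixedPoints.subalgebra R S H) :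
    cosetHom R S H (QuotientGroup.mk g) s = g • (s : S) := by
  obtain ⟨h, hh⟩ := QuotientGroup.mk_out_eq_mul H g
  change (QuotientGroup.mk g : G ⧸ H).out • (s : S) = g • (s : S)
  rw [hh, mul_smul]
  exact congrArg (g • ·) (s.2 h)

lemma linearIndependent_cosetHom_apply [IsDomain S] [Finite G] (hG : (Nat.card G : S) ≠ 0)
    [Algebra.IsInvariant R S G] [FaithfulSMul R S] {ι : Type*} [Finite ι]
    {b : ι → FixedPoints.subalgebra R S H} (hb : LinearIndependent R b) :
    LinearIndependent S fun i q ↦ cosetHom R S H q (b i) := by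
  have := Fintype.ofFinite G
  have := Fintype.ofFinite ι
  have : Nontrivial R := (algebraMap R S).domain_nontrivial
  refine Fintype.linearIndependent_iff.mpr fun c hc i₀ ↦ ?_
  by_contra hci
  have hrel (g : G) : ∑ i, c i * g • (b i : S) = 0 := by
    simpa [cosetHom_mk] using congrFun hc (QuotientGroup.mk g)
  obtain ⟨r, hr0, s, hs⟩ := ((Algebra.IsInvariant.isIntegral R S G).isIntegral
    (c i₀)).isAlgebraic.exists_nonzero_dvd (mem_nonZeroDivisors_of_ne_zero hci)
  choose t ht using fun i ↦ exists_algebraMap_eq_sum_smul (R := R) (G := G) (s * c i)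
  have hsum : ∑ i, t i • b i = 0 := Subtype.ext <| calc
    _ = ∑ i, ∑ g : G, g • (s * c i) * (b i : S) := by
      simp [Algebra.smul_def, ht, Finset.sum_mul]
    _ = ∑ g : G, g • (s * ∑ i, c i * g⁻¹ • (b i : S)) := by
      rw [Finset.sum_comm]
      simp [Finset.mul_sum, Finset.smul_sum, smul_mul', mul_assoc]
    _ = 0 := by simp [hrel]
  have hcard : (Nat.card G : S) * algebraMap R S r = 0 := calc
    _ = ∑ g : G, g • (s * c i₀) := by
      simp [mul_comm s, ← hs, Nat.card_eq_fintype_card]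
    _ = 0 := by rw [← ht, Fintype.linearIndependent_iff.mp hb t hsum i₀, map_zero]
  exact hr0 ((FaithfulSMul.algebraMap_eq_zero_iff R S).mp ((mul_eq_zero.mp hcard).resolve_left hG))

end Invariants

section Reynolds

open CategoryTheory Abelian

universe u

lemma subsingleton_ext_fixedPoints {G : Type*} [Group G] [Finite G] {R S : Type u} [CommRing R]
    [CommRing S] [Algebra R S] [MulSemiringAction G S] [SMulCommClass G R S]
    (hG : IsUnit (Nat.card G : R)) {L : ModuleCat.{u} R} {i : ℕ}
    (h : Subsingleton (Ext (ModuleCat.of R S) L i)) :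
    Subsingleton (Ext (ModuleCat.of R (FixedPoints.subalgebra R S G)) L i) := by
  have := Fintype.ofFinite G
  have : Invertible (Fintype.card G : R) := (Nat.card_eq_fintype_card (α := G) ▸ hG).invertible
  have hπ := (Representation.ofDistribMulAction R G S).isProj_averageMap
  refine subsingleton_ext_of_comp_eq_smul (r := 1)
    (ModuleCat.ofHom (FixedPoints.subalgebra R S G).val.toLinearMap)
    (ModuleCat.ofHom hπ.codRestrict) ?_ (by simp) h
  rw [one_smul]
  ext x
  exact congrArg Subtype.val (hπ.codRestrict_apply_cod x)

end Reynolds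

section Purity

open scoped Pointwise

lemma notMem_of_forall_span_singleton {S : Type*} [CommRing S] [IsDomain S]
    [UniqueFactorizationMonoid S] {Q : Ideal S} [Q.IsPrime] {x : S}
    (h : ∀ p ∈ Q, (Ideal.span {p}).IsPrime → x ∉ Ideal.span {p}) : x ∉ Q := fun hx ↦ by
  have hx0 : x ≠ 0 := fun hx0 ↦
    h 0 Q.zero_mem (by simpa using Ideal.isPrime_bot) (by simp [hx0])
  obtain ⟨s, hs, hsx⟩ := UniqueFactorizationMonoid.exists_prime_factors x hx0
  obtain ⟨p, hps, hpQ⟩ := (Ideal.IsPrime.multiset_prod_mem_iff_exists_mem ‹_› s).mp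
    ((Q.mem_iff_of_associated hsx).mpr hx)
  exact h p hpQ ((Ideal.span_singleton_prime (hs p hps).ne_zero).mpr (hs p hps))
    (Ideal.mem_span_singleton.mpr ((Multiset.dvd_prod hps).trans hsx.dvd))

variable {R S G : Type*} [CommRing R] [CommRing S] [Algebra R S] [Group G]
  [MulSemiringAction G S] [SMulCommClass G R S] {H : Subgroup G}

lemma injective_mkₐ_comp_cosetHom (K : Type*) [Field K] [Infinite K] [Algebra K S]
    [SMulCommClass G K S] [Finite H]
    (hH : ∀ p : S, (Ideal.span {p}).IsPrime → (Ideal.span {p}).inertia G ≤ H) {p : S}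
    (hp : (Ideal.span {p}).IsPrime) :
    Function.Injective fun q : G ⧸ H ↦
      (Ideal.Quotient.mkₐ R (Ideal.span {p})).comp (cosetHom R S H q) := by
  rintro ⟨g₁⟩ ⟨g₂⟩ h
  obtain ⟨u, hu⟩ : ∃ u : H, ∀ t, Ideal.Quotient.mk (Ideal.span {p}) (g₁ • t) =
      Ideal.Quotient.mk (Ideal.span {p}) (g₂ • u • t) := by
    refine exists_forall_apply_eq_apply_smul (K := K)
      (φ₁ := (Ideal.Quotient.mkₐ K _).comp (MulSemiringAction.toAlgHom K S g₁))
      (φ₂ := (Ideal.Quotient.mkₐ K _).comp (MulSemiringAction.toAlgHom K S g₂)) fun s hs ↦ ?_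
    have hs' := DFunLike.congr_fun h ⟨s, hs⟩
    change Ideal.Quotient.mk _ (cosetHom R S H g₁ ⟨s, hs⟩) =
      Ideal.Quotient.mk _ (cosetHom R S H g₂ ⟨s, hs⟩) at hs'
    rwa [cosetHom_mk, cosetHom_mk] at hs'
  set w : G := g₂ * u with hwu
  have hspan : Ideal.span {w⁻¹ • p} = w⁻¹ • Ideal.span {p} := by
    rw [Ideal.smul_closure, Set.smul_set_singleton]
  have hw : w⁻¹ * g₁ ∈ (Ideal.span {w⁻¹ • p}).inertia G := fun t ↦ by
    rw [hspan, Submodule.mem_toAddSubgroup, Ideal.mem_inv_pointwise_smul_iff, smul_sub, ← mul_smul,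
      mul_inv_cancel_left, hwu, mul_smul]
    exact Ideal.Quotient.eq.mp (hu t)
  have hwH := H.mul_mem u.2 (hH _ (hspan ▸ inferInstance) hw)
  refine (QuotientGroup.eq.mpr ?_).symm
  simpa [w, mul_assoc] using hwH

lemma mk_cosetHom_of_inertia_eq_top {Q : Ideal S} (hQ : Q.inertia G = ⊤) (q : G ⧸ H)
    (s : FixedPoints.subalgebra R S H) :
    Ideal.Quotient.mk Q (cosetHom R S H q s) = Ideal.Quotient.mk Q s :=
  Ideal.Quotient.eq.mpr ((hQ ▸ Subgroup.mem_top q.out : q.out ∈ Q.inertia G) s)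

lemma det_cosetHom_apply_notMem [Fintype (G ⧸ H)] [DecidableEq (G ⧸ H)] {P : Ideal S} [P.IsPrime]
    (hinj : Function.Injective fun q : G ⧸ H ↦ (Ideal.Quotient.mkₐ R P).comp (cosetHom R S H q))
    {b : G ⧸ H → FixedPoints.subalgebra R S H} {r : R}
    (hr : ∀ x, r • x ∈ Submodule.span R (Set.range b)) (hrP : algebraMap R S r ∉ P) :
    (Matrix.of fun q q' ↦ cosetHom R S H q (b q')).det ∉ P := by
  rw [← Ideal.Quotient.eq_zero_iff_mem, RingHom.map_det, ← ne_eq,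
    ← Matrix.nonsingular_iff_det_ne_zero]
  have hrows := linearIndependent_algHom_apply (D := S ⧸ P) hr
    (fun h ↦ hrP (Ideal.Quotient.eq_zero_iff_mem.mp h)) hinj
  exact .of_linearIndependent_row hrows

variable [IsDomain S]

lemma card_eq_card_quotient [Finite G] [Algebra.IsInvariant R S G] [FaithfulSMul R S]
    (hG : (Nat.card G : S) ≠ 0) (hinj : Function.Injective (cosetHom R S H)) {ι : Type*} [Finite ι]
    {b : ι → FixedPoints.subalgebra R S H} (hb : LinearIndependent R b) {r : R} (hr0 : r ≠ 0)
    (hr : ∀ x, r • x ∈ Submodule.span R (Set.range b)) : Nat.card ι = Nat.card (G ⧸ H) := by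
  have := Fintype.ofFinite ι
  have := Fintype.ofFinite (G ⧸ H)
  have hrows := linearIndependent_cosetHom_apply hG hb
  have hcols := linearIndependent_algHom_apply hr
    ((map_ne_zero_iff _ (FaithfulSMul.algebraMap_injective R S)).mpr hr0) hinj
  rw [Nat.card_eq_fintype_card, Nat.card_eq_fintype_card]
  exact le_antisymm (by simpa using hrows.fintype_card_le_finrank)
    (by simpa using hcols.fintype_card_le_finrank)

theorem eq_top_of_injective_mkₐ_comp_cosetHom [Finite G] [UniqueFactorizationMonoid S]
    [Algebra.IsInvariant R S G] [FaithfulSMul R S] (hG : (Nat.card G : S) ≠ 0)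
    (hH : ∀ p : S, (Ideal.span {p}).IsPrime → Function.Injective fun q : G ⧸ H ↦
      (Ideal.Quotient.mkₐ R (Ideal.span {p})).comp (cosetHom R S H q))
    {ι : Type*} [Finite ι] {b : ι → FixedPoints.subalgebra R S H} (hb : LinearIndependent R b)
    {r : R} (hr : ∀ x, r • x ∈ Submodule.span R (Set.range b)) {Q : Ideal S} [Q.IsPrime]
    (hrQ : algebraMap R S r ∉ Q) (hQ : Q.inertia G = ⊤) : H = ⊤ := by
  classical
  have := Fintype.ofFinite (G ⧸ H)
  have hr0 : r ≠ 0 := fun h ↦ hrQ (by simp [h])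
  have hinj : Function.Injective (cosetHom R S H) := fun q₁ q₂ h ↦
    hH 0 (by simpa using Ideal.isPrime_bot) (by simp only [h])
  obtain ⟨σ⟩ : Nonempty (G ⧸ H ≃ ι) :=
    Finite.card_eq.mp (card_eq_card_quotient hG hinj hb hr0 hr).symm
  have hrσ (x) : r • x ∈ Submodule.span R (Set.range (b ∘ σ)) := by
    rw [σ.surjective.range_comp]
    exact hr x
  have hdet : (Matrix.of fun q q' ↦ cosetHom R S H q (b (σ q'))).det ∉ Q :=
    notMem_of_forall_span_singleton fun p hpQ hp ↦ det_cosetHom_apply_notMem (hH p hp) hrσ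
      fun hrp ↦ hrQ ((Ideal.span_singleton_le_iff_mem Q).mpr hpQ hrp)
  have : Subsingleton (G ⧸ H) := by
    refine ⟨fun q₁ q₂ ↦ by_contra fun hne ↦ hdet ?_⟩
    rw [← Ideal.Quotient.eq_zero_iff_mem, RingHom.map_det]
    refine Matrix.det_zero_of_row_eq hne (funext fun q ↦ ?_)
    exact (mk_cosetHom_of_inertia_eq_top hQ q₁ _).trans
      (mk_cosetHom_of_inertia_eq_top hQ q₂ _).symm
  exact QuotientGroup.subgroup_eq_top_of_subsingleton H ‹_›

end Purity

section LinearAction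

open MvPolynomial

lemma irreducible_of_isHomogeneous_one {σ K : Type*} [Field K] {p : MvPolynomial σ K}
    (hp : p.IsHomogeneous 1) (hp0 : p ≠ 0) : Irreducible p := by
  refine irreducible_of_totalDegree_eq_one (hp.totalDegree hp0) fun x hx ↦ ?_
  obtain ⟨d, hd⟩ := ne_zero_iff.mp hp0
  exact isUnit_iff_ne_zero.mpr fun hx0 ↦ hd (zero_dvd_iff.mp (hx0 ▸ hx d))

variable {σ A : Type*} [Fintype σ] [DecidableEq σ] [CommRing A]

variable (σ A) in
/-- The action of `GL(V)`, `V = A^σ`, on the polynomial functions on `V` by substitution,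
`g • P = P ∘ g⁻¹`. -/
@[reducible]
noncomputable def linearAction :
    MulSemiringAction ((σ → A) ≃ₗ[A] (σ → A)) (MvPolynomial σ A) where
  smul g := bind₁ (g⁻¹).toLinearMap.toMatrix'.toMvPolynomial
  one_smul P := by
    change bind₁ (LinearMap.toMatrix' LinearMap.id).toMvPolynomial P = P
    rw [LinearMap.toMatrix'_id, Matrix.toMvPolynomial_one, bind₁_X_left, AlgHom.id_apply]
  mul_smul g h P := by
    change bind₁ (LinearMap.toMatrix' ((g * h)⁻¹).toLinearMap).toMvPolynomial P =
      bind₁ _ (bind₁ _ P)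
    rw [bind₁_bind₁, mul_inv_rev]
    change bind₁ (LinearMap.toMatrix' ((h⁻¹).toLinearMap ∘ₗ (g⁻¹).toLinearMap)).toMvPolynomial P = _
    simp only [LinearMap.toMatrix'_comp, _root_.funext (Matrix.toMvPolynomial_mul _ _)]
  smul_zero _ := map_zero (bind₁ _)
  smul_add _ := map_add (bind₁ _)
  smul_one _ := map_one (bind₁ _)
  smul_mul _ := map_mul (bind₁ _)

attribute [local instance] linearAction

lemma linearAction_smul_X (g : (σ → A) ≃ₗ[A] (σ → A)) (i : σ) :
    g • (X i : MvPolynomial σ A) = (g⁻¹).toLinearMap.toMatrix'.toMvPolynomial i :=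
  bind₁_X_right _ i

lemma eval_linearAction_smul (g : (σ → A) ≃ₗ[A] (σ → A)) (P : MvPolynomial σ A) (v : σ → A) :
    eval v (g • P) = eval (g⁻¹ v) P := by
  change eval₂Hom (RingHom.id A) v (bind₁ _ P) = _
  rw [eval₂Hom_bind₁]
  congr 2
  ext i
  exact (Matrix.toMvPolynomial_eval_eq_apply _ i v).trans
    (congrFun (LinearMap.toMatrix'_mulVec _ v) i)

lemma smulCommClass_linearAction :
    SMulCommClass ((σ → A) ≃ₗ[A] (σ → A)) A (MvPolynomial σ A) :=
  ⟨fun _ c P ↦ map_smul (bind₁ _) c P⟩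

lemma constantCoeff_linearAction_smul (g : (σ → A) ≃ₗ[A] (σ → A)) (P : MvPolynomial σ A) :
    constantCoeff (g • P) = constantCoeff P := by
  rw [← eval_zero, eval_linearAction_smul, map_zero, eval_zero]

lemma linearAction_smul_eq_self_iff [IsDomain A] [Infinite A] (g : (σ → A) ≃ₗ[A] (σ → A))
    (P : MvPolynomial σ A) : g • P = P ↔ ∀ v, eval (g v) P = eval v P := by
  simp_rw [MvPolynomial.funext_iff, eval_linearAction_smul]
  exact ⟨fun h v ↦ by simpa using (h (g v)).symm, fun h v ↦ by simpa using (h (g⁻¹ v)).symm⟩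

variable {K : Type*} [Field K]

lemma exists_dual_forall_apply_eq_self {g : (σ → K) ≃ₗ[K] (σ → K)} {p : MvPolynomial σ K}
    (hp : (Ideal.span {p}).IsPrime) (hg : g ∈ (Ideal.span {p}).inertia ((σ → K) ≃ₗ[K] (σ → K))) :
    ∃ L : Module.Dual K (σ → K), ∀ v, L v = 0 → g v = v := by
  have hdvd (i : σ) : p ∣ g • X i - X i := Ideal.mem_span_singleton.mp (hg (X i))
  have heval (v : σ → K) (i : σ) : eval v (g • X i - X i) = (g⁻¹ v - v) i := by
    rw [map_sub, eval_linearAction_smul, eval_X, eval_X, Pi.sub_apply]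
  suffices ∃ L : Module.Dual K (σ → K), ∀ v, L v = 0 → ∀ i, (g⁻¹ v - v) i = 0 by
    obtain ⟨L, hL⟩ := this
    refine ⟨L, fun v hv ↦ ?_⟩
    have hgv : g⁻¹ v = v := sub_eq_zero.mp (funext (hL v hv))
    exact (congrArg g hgv).symm.trans (g.apply_symm_apply v)
  by_cases hX : ∃ j, g • (X j : MvPolynomial σ K) - X j ≠ 0
  · obtain ⟨j, hj⟩ := hX
    have hhom : (g • (X j : MvPolynomial σ K) - X j).IsHomogeneous 1 :=
      (linearAction_smul_X g j ▸ Matrix.toMvPolynomial_isHomogeneous _ j).sub (isHomogeneous_X K j)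
    have hirr := irreducible_of_isHomogeneous_one hhom hj
    have hdvd' : g • X j - X j ∣ p := ((hirr.dvd_iff.mp (hdvd j)).resolve_left fun hu ↦
      hp.ne_top (Ideal.span_singleton_eq_top.mpr hu)).dvd
    refine ⟨LinearMap.proj j ∘ₗ ((g⁻¹).toLinearMap - LinearMap.id), fun v hv i ↦ ?_⟩
    have hv' : eval v (g • X j - X j) = 0 := (heval v j).trans hv
    rw [← heval, ← zero_dvd_iff, ← hv']
    exact map_dvd (eval v) (hdvd'.trans (hdvd i))
  · push Not at hX
    exact ⟨0, fun v _ i ↦ by rw [← heval, hX, map_zero]⟩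

lemma eq_one_or_finrank_ker_sub_id {V : Type*} [AddCommGroup V] [Module K V]
    [FiniteDimensional K V] {g : V ≃ₗ[K] V} {L : Module.Dual K V} (hg : ∀ v, L v = 0 → g v = v) :
    g = 1 ∨ Module.finrank K V -
      Module.finrank K (LinearMap.ker ((g : V →ₗ[K] V) - LinearMap.id)) = 1 := by
  have hker : LinearMap.ker L ≤ LinearMap.ker ((g : V →ₗ[K] V) - LinearMap.id) := fun v hv ↦ by
    simpa [sub_eq_zero] using hg v hv
  by_cases htop : LinearMap.ker ((g : V →ₗ[K] V) - LinearMap.id) = ⊤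
  · exact Or.inl (LinearEquiv.toLinearMap_injective (sub_eq_zero.mp (LinearMap.ker_eq_top.mp htop)))
  · right
    have hle := Submodule.finrank_mono hker
    have hlt := Submodule.finrank_lt htop
    have hL := L.finrank_range_add_finrank_ker
    have hrange : Module.finrank K (LinearMap.range L) ≤ 1 := by
      simpa using Submodule.finrank_le (LinearMap.range L)
    lia

end LinearAction

section Translation

open MvPolynomial

variable {ι R A : Type*} [CommRing R] [CommRing A] [Algebra R A]

lemma algebraicIndependent_sub_algebraMap {x : ι → A} (hx : AlgebraicIndependent R x) (c : ι → R) :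
    AlgebraicIndependent R fun i ↦ x i - algebraMap R A (c i) := by
  have hcomp : aeval (fun i ↦ x i - algebraMap R A (c i)) =
      (aeval x).comp (aeval fun i ↦ X i - C (c i)) := by
    ext i
    simp
  have hinv : (aeval fun i ↦ X i + C (c i)).comp (aeval fun i ↦ X i - C (c i)) =
      AlgHom.id R (MvPolynomial ι R) := by
    ext i : 1
    simp
  rw [AlgebraicIndependent, hcomp, AlgHom.coe_comp]
  refine Function.Injective.comp hx
    (Function.Injective.of_comp (f := aeval fun i ↦ X i + C (c i)) ?_)
  rw [← AlgHom.coe_comp, hinv]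
  exact Function.injective_id

lemma adjoin_range_le_adjoin_range_sub_algebraMap (x : ι → A) (c : ι → R) :
    Algebra.adjoin R (Set.range x) ≤
      Algebra.adjoin R (Set.range fun i ↦ x i - algebraMap R A (c i)) := by
  refine Algebra.adjoin_le (Set.range_subset_iff.mpr fun i ↦ ?_)
  rw [← sub_add_cancel (x i) (algebraMap R A (c i))]
  exact add_mem (Algebra.subset_adjoin ⟨i, rfl⟩) (Subalgebra.algebraMap_mem _ _)

end Translation

section PolynomialInvariants

open MvPolynomial

lemma isMaximal_idealOfVars {σ K : Type*} [Field K] : (idealOfVars σ K).IsMaximal := by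
  rw [← ker_constantCoeff_eq_idealOfVars]
  exact RingHom.ker_isMaximal_of_surjective _ fun c ↦ ⟨C c, constantCoeff_C _ c⟩

lemma constantCoeff_aeval {σ τ A : Type*} [CommRing A] {f : σ → MvPolynomial τ A}
    (hf : ∀ i, constantCoeff (f i) = 0) (r : MvPolynomial σ A) :
    constantCoeff (aeval f r) = constantCoeff r := by
  rw [map_aeval, _root_.funext hf]
  simp

lemma finite_subalgebra_of_isInvariant (K G : Type*) {R S : Type*} [CommRing K] [CommRing R]
    [IsNoetherianRing R] [CommRing S] [Algebra K R] [Algebra R S] [Algebra K S]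
    [IsScalarTower K R S] [Algebra.FiniteType K S] [Group G] [Finite G] [MulSemiringAction G S]
    [SMulCommClass G R S] [Algebra.IsInvariant R S G] (A : Subalgebra R S) : Module.Finite R A := by
  have := Algebra.IsInvariant.isIntegral R S G
  have := Algebra.FiniteType.of_restrictScalars_finiteType K R S
  have : Module.Finite R S := Algebra.IsIntegral.finite
  exact inferInstanceAs (Module.Finite R (Subalgebra.toSubmodule A))

universe u

variable {K : Type u} [Field K] {m n : ℕ}

lemma le_of_injective_algHom {φ : MvPolynomial (Fin m) K →ₐ[K] MvPolynomial (Fin n) K}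
    (hφ : Function.Injective φ) : m ≤ n := by
  simpa [MvPolynomial.trdeg_of_isDomain] using trdeg_le_of_injective φ hφ

variable {G : Type*} [Group G] [Finite G] [MulSemiringAction G (MvPolynomial (Fin n) K)]

theorem eq_top_of_isInvariant [Infinite K] [SMulCommClass G K (MvPolynomial (Fin n) K)]
    [Algebra (MvPolynomial (Fin m) K) (MvPolynomial (Fin n) K)]
    [IsScalarTower K (MvPolynomial (Fin m) K) (MvPolynomial (Fin n) K)]
    [FaithfulSMul (MvPolynomial (Fin m) K) (MvPolynomial (Fin n) K)]
    [SMulCommClass G (MvPolynomial (Fin m) K) (MvPolynomial (Fin n) K)]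
    [Algebra.IsInvariant (MvPolynomial (Fin m) K) (MvPolynomial (Fin n) K) G]
    (hG : (Nat.card G : K) ≠ 0)
    (hccG : ∀ (g : G) (P : MvPolynomial (Fin n) K), constantCoeff (g • P) = constantCoeff P)
    (hcc : ∀ r : MvPolynomial (Fin m) K,
      constantCoeff (algebraMap _ (MvPolynomial (Fin n) K) r) = constantCoeff r)
    {H : Subgroup G} (hH : ∀ p : MvPolynomial (Fin n) K, (Ideal.span {p}).IsPrime →
      (Ideal.span {p}).inertia G ≤ H) : H = ⊤ := by
  let R := MvPolynomial (Fin m) K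
  let S := MvPolynomial (Fin n) K
  let Q : Ideal S := RingHom.ker constantCoeff
  have : Q.IsPrime := RingHom.ker_isPrime _
  have hQR : Q.comap (algebraMap R S) = idealOfVars (Fin m) K := by
    rw [← ker_constantCoeff_eq_idealOfVars, RingHom.comap_ker]
    exact congrArg RingHom.ker (RingHom.ext hcc)
  have hQG : Q.inertia G = ⊤ := eq_top_iff.mpr fun g _ s ↦
    (RingHom.sub_mem_ker_iff (constantCoeff : S →+* K)).mpr (hccG g s)
  have hXQ (j : Fin n) (g : G) : g • (X j : S) ∈ Q := by
    rw [RingHom.mem_ker, hccG, constantCoeff_X]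
  have hmn : m ≤ n := le_of_injective_algHom (φ := IsScalarTower.toAlgHom K R S)
    (FaithfulSMul.algebraMap_injective R S)
  have hExt := subsingleton_ext_quotient_idealOfVars hmn hcc fun j ↦
    hQR ▸ mem_radical_map_comap (hXQ j)
  have hHK : (Nat.card H : K) ≠ 0 := fun h ↦ hG <|
    zero_dvd_iff.mp (h ▸ Nat.cast_dvd_cast H.card_subgroup_dvd_card)
  have hHR : IsUnit (Nat.card H : R) := by
    simpa using (IsUnit.mk0 _ hHK).map (algebraMap K R)
  have hGS : (Nat.card G : S) ≠ 0 := by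
    simpa using (map_ne_zero_iff _ (FaithfulSMul.algebraMap_injective K S)).mpr hG
  have := isMaximal_idealOfVars (σ := Fin m) (K := K)
  have := finite_subalgebra_of_isInvariant K G (FixedPoints.subalgebra R S H)
  obtain ⟨k, b, hb, r, hrI, hr⟩ := exists_linearIndependent_of_subsingleton_ext
    (subsingleton_ext_fixedPoints (G := H) hHR hExt)
  have hrQ : algebraMap R S r ∉ Q := by rwa [← Ideal.mem_comap, hQR]
  exact eq_top_of_injective_mkₐ_comp_cosetHom hGS
    (fun p hp ↦ injective_mkₐ_comp_cosetHom K hH hp) hb hr hrQ hQG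

variable [Infinite K] [SMulCommClass G K (MvPolynomial (Fin n) K)]

lemma eq_top_of_constantCoeff_eq_zero (hG : (Nat.card G : K) ≠ 0)
    (hccG : ∀ (g : G) (P : MvPolynomial (Fin n) K), constantCoeff (g • P) = constantCoeff P)
    {f : Fin m → MvPolynomial (Fin n) K} (hinv : ∀ (g : G) i, g • f i = f i)
    (hf : ∀ i, constantCoeff (f i) = 0) (hind : AlgebraicIndependent K f)
    (hgen : ∀ P, (∀ g : G, g • P = P) → P ∈ Algebra.adjoin K (Set.range f))
    {H : Subgroup G} (hH : ∀ p : MvPolynomial (Fin n) K, (Ideal.span {p}).IsPrime →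
      (Ideal.span {p}).inertia G ≤ H) : H = ⊤ := by
  let R := MvPolynomial (Fin m) K
  let S := MvPolynomial (Fin n) K
  let : Algebra R S := (aeval f).toAlgebra
  have : IsScalarTower K R S := .of_algebraMap_eq fun c ↦ ((aeval f).commutes c).symm
  have : FaithfulSMul R S := (faithfulSMul_iff_algebraMap_injective R S).mpr hind
  have hfix (g : G) (r : R) : g • algebraMap R S r = algebraMap R S r := by
    have hcomp : (MulSemiringAction.toAlgHom K S g).comp (aeval f) = aeval f :=
      MvPolynomial.algHom_ext fun i ↦ by
        rw [AlgHom.comp_apply, aeval_X, MulSemiringAction.toAlgHom_apply, hinv]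
    exact DFunLike.congr_fun hcomp r
  have : SMulCommClass G R S := ⟨fun g r s ↦ by
    rw [Algebra.smul_def, Algebra.smul_def, smul_mul', hfix]⟩
  have : Algebra.IsInvariant R S G := ⟨fun s hs ↦ by
    have hs' := hgen s hs
    rwa [Algebra.adjoin_range_eq_range_aeval] at hs'⟩
  exact eq_top_of_isInvariant hG hccG (constantCoeff_aeval hf) hH

theorem eq_top_of_algebraicIndependent (hG : (Nat.card G : K) ≠ 0)
    (hccG : ∀ (g : G) (P : MvPolynomial (Fin n) K), constantCoeff (g • P) = constantCoeff P)
    {f : Fin m → MvPolynomial (Fin n) K} (hinv : ∀ (g : G) i, g • f i = f i)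
    (hind : AlgebraicIndependent K f)
    (hgen : ∀ P, (∀ g : G, g • P = P) → P ∈ Algebra.adjoin K (Set.range f))
    {H : Subgroup G} (hH : ∀ p : MvPolynomial (Fin n) K, (Ideal.span {p}).IsPrime →
      (Ideal.span {p}).inertia G ≤ H) : H = ⊤ :=
  eq_top_of_constantCoeff_eq_zero hG hccG
    (f := fun i ↦ f i - algebraMap K _ (constantCoeff (f i)))
    (fun g i ↦ by rw [smul_sub, hinv, smul_algebraMap]) (fun i ↦ by simp)
    (algebraicIndependent_sub_algebraMap hind _)
    (fun P hP ↦ adjoin_range_le_adjoin_range_sub_algebraMap f _ (hgen P hP)) hH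

end PolynomialInvariants

section ChevalleyShephardTodd

open MvPolynomial

attribute [local instance] linearAction

theorem generated_by_complex_reflections_of_invariants_polynomial_general
    {K : Type*} [Field K] [Infinite K] (n : ℕ) (G : Subgroup ((Fin n → K) ≃ₗ[K] (Fin n → K)))
    [Finite G] (hG : (Nat.card G : K) ≠ 0)
    (hpoly : ∃ (m : ℕ) (f : Fin m → MvPolynomial (Fin n) K),
      (∀ i, ∀ g ∈ G, ∀ v : Fin n → K, eval (g v) (f i) = eval v (f i)) ∧
      AlgebraicIndependent K f ∧
      (∀ P : MvPolynomial (Fin n) K,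
        (∀ g ∈ G, ∀ v : Fin n → K, eval (g v) P = eval v P) →
          P ∈ Algebra.adjoin K (Set.range f))) :
    Subgroup.closure {g : (Fin n → K) ≃ₗ[K] (Fin n → K) | g ∈ G ∧ IsOfFinOrder g ∧
        Module.finrank K (Fin n → K) -
          Module.finrank K (LinearMap.ker
            ((g : (Fin n → K) →ₗ[K] (Fin n → K)) - LinearMap.id)) = 1} = G := by
  obtain ⟨m, f, hinv, hind, hgen⟩ := hpoly
  have := smulCommClass_linearAction (σ := Fin n) (A := K)
  refine le_antisymm ((Subgroup.closure_le G).mpr fun g hg ↦ hg.1) ?_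
  rw [← Subgroup.subgroupOf_eq_top]
  refine eq_top_of_algebraicIndependent hG (fun g ↦ constantCoeff_linearAction_smul g.1)
    (fun g i ↦ (linearAction_smul_eq_self_iff g.1 (f i)).mpr (hinv i g.1 g.2)) hind
    (fun P hP ↦ hgen P fun g hg ↦ (linearAction_smul_eq_self_iff g P).mp (hP ⟨g, hg⟩))
    fun p hp g hg ↦ Subgroup.mem_subgroupOf.mpr ?_
  obtain ⟨L, hL⟩ := exists_dual_forall_apply_eq_self hp (Ideal.coe_mem_inertia.mpr hg)
  obtain h | h := eq_one_or_finrank_ker_sub_id hL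
  · exact h ▸ one_mem _
  · exact Subgroup.subset_closure ⟨g.2, G.subtype.isOfFinOrder (isOfFinOrder_of_finite g), h⟩

end ChevalleyShephardTodd

open MvPolynomial in
/-- Chevalley–Shephard–Todd (one direction): if the algebra of `G`-invariant
polynomial functions on `V = ℂⁿ` is a graded polynomial algebra — i.e. it is
generated by algebraically independent homogeneous invariant polynomials —
then the finite group `G ⊆ GL(V)` is generated by complex reflections. -/
theorem generated_by_complex_reflections_of_invariants_polynomial
    (n : ℕ) (G : Subgroup ((Fin n → ℂ) ≃ₗ[ℂ] (Fin n → ℂ))) (hGfin : Finite G)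
    (hpoly : ∃ (m : ℕ) (f : Fin m → MvPolynomial (Fin n) ℂ),
      (∀ i, ∀ g ∈ G, ∀ v : Fin n → ℂ, eval (g v) (f i) = eval v (f i)) ∧
      (∀ i, ∃ d : ℕ, (f i).IsHomogeneous d) ∧
      AlgebraicIndependent ℂ f ∧
      (∀ P : MvPolynomial (Fin n) ℂ,
        (∀ g ∈ G, ∀ v : Fin n → ℂ, eval (g v) P = eval v P) →
          P ∈ Algebra.adjoin ℂ (Set.range f))) :
    Subgroup.closure {g : (Fin n → ℂ) ≃ₗ[ℂ] (Fin n → ℂ) | g ∈ G ∧ IsOfFinOrder g ∧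
        Module.finrank ℂ (Fin n → ℂ) -
          Module.finrank ℂ (LinearMap.ker
            ((g : (Fin n → ℂ) →ₗ[ℂ] (Fin n → ℂ)) - LinearMap.id)) = 1} = G := by
  obtain ⟨m, f, hinv, -, hind, hgen⟩ := hpoly
  exact generated_by_complex_reflections_of_invariants_polynomial_general n G
    (Nat.cast_ne_zero.mpr Nat.card_pos.ne') ⟨m, f, hinv, hind, hgen⟩
end

section
/- Let A be an n×n complex matrix which is skew-symmetric (Aᵀ = −A). Then there exist a unitary matrix U and nonnegative real numbers λ₁, …, λ_k (with 2k ≤ n) such that Uᵀ A U is block-diagonal, consisting of the 2×2 blocks [[0, λ_i], [−λ_i, 0]] for i = 1, …, k followed by a zero block. Equivalently: every alternating bilinear form Θ on a finite-dimensional complex Hermitian inner product space L can be written as Θ = Σ_i λ_i z_{2i−1} ∧ z_{2i}, where z₁, …, z_n is the dual basis of an orthonormal basis of L and the λ_i are nonnegative reals. -/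
open Matrix

open scoped InnerProductSpace ComplexConjugate

/-!
Represent an alternating form `Θ` by the conjugate-linear map `T` with `⟪T x, y⟫ = Θ x y`. The
linear map `-T²` is self-adjoint, because `⟪-T² x, y⟫ = ⟪T y, T x⟫`. If `u` is a unit eigenvector of
`-T²` for a nonzero eigenvalue, then `T` maps `u` to `r v` and `v` to `-r u`, where `r = ‖T u‖ > 0`
and `v` is a unit vector orthogonal to `u`. So `Θ` has the required block on the span of `u` and `v`
and couples this plane trivially to its orthogonal complement, on which one continues by induction.
-/

section SkewBlockMatrix

variable {R : Type*}

/-- The block-diagonal skew-symmetric matrix of size `n` with blocks `[[0, d l], [-d l, 0]]`, the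
`l`-th one in rows and columns `2 * l` and `2 * l + 1`. If `n` is odd, the last row and column
vanish. The values `d l` with `n / 2 ≤ l` do not occur in it. -/
def skewBlockMatrix [Zero R] [Neg R] (n : ℕ) (d : ℕ → R) : Matrix (Fin n) (Fin n) R :=
  Matrix.of fun i j : Fin n =>
    if i.1 + 1 = j.1 ∧ i.1 % 2 = 0 then d (i.1 / 2)
    else if j.1 + 1 = i.1 ∧ j.1 % 2 = 0 then -d (j.1 / 2)
    else 0

lemma skewBlockMatrix_zero [NegZeroClass R] (n : ℕ) : skewBlockMatrix n (fun _ => (0 : R)) = 0 := by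
  ext i j
  simp [skewBlockMatrix]

variable [CommRing R] {M : Type*} [AddCommMonoid M] [Module R M]

lemma apply_vecCons_vecCons_eq_skewBlockMatrix {Θ : M →ₗ[R] M →ₗ[R] R} (hΘ : Θ.IsAlt) {m : ℕ}
    {u v : M} {b : Fin m → M} {d : ℕ → R} (huv : Θ u v = d 0) (hub : ∀ i, Θ u (b i) = 0)
    (hvb : ∀ i, Θ v (b i) = 0)
    (hb : ∀ i j, Θ (b i) (b j) = skewBlockMatrix m (fun l => d (l + 1)) i j) (i j : Fin (m + 2)) :
    Θ (vecCons u (vecCons v b) i) (vecCons u (vecCons v b) j) = skewBlockMatrix (m + 2) d i j := by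
  have hvu : Θ v u = -d 0 := by rw [← hΘ.neg, huv]
  have hbu (i) : Θ (b i) u = 0 := by rw [← hΘ.neg, hub, neg_zero]
  have hbv (i) : Θ (b i) v = 0 := by rw [← hΘ.neg, hvb, neg_zero]
  refine Fin.cases ?_ (Fin.cases ?_ fun i => ?_) i <;>
  refine Fin.cases ?_ (Fin.cases ?_ fun j => ?_) j <;>
  simp [skewBlockMatrix, hΘ.self_eq_zero, huv, hvu, hub, hvb, hbu, hbv, hb, add_assoc]

end SkewBlockMatrix

lemma orthonormal_vecCons_vecCons {𝕜 E : Type*} [RCLike 𝕜] [SeminormedAddCommGroup E]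
    [InnerProductSpace 𝕜 E] {m : ℕ} {u v : E} {b : Fin m → E} (hu : ‖u‖ = 1) (hv : ‖v‖ = 1)
    (huv : ⟪u, v⟫_𝕜 = 0) (hub : ∀ i, ⟪u, b i⟫_𝕜 = 0) (hvb : ∀ i, ⟪v, b i⟫_𝕜 = 0)
    (hb : Orthonormal 𝕜 b) : Orthonormal 𝕜 (vecCons u (vecCons v b)) :=
  orthonormal_vecCons_iff.2 ⟨hu, Fin.cases huv hub, orthonormal_vecCons_iff.2 ⟨hv, hvb, hb⟩⟩

section InnerProductSpace

variable {𝕜 E : Type*} [RCLike 𝕜] [NormedAddCommGroup E] [InnerProductSpace 𝕜 E]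

lemma inner_eq_zero_of_mem_orthogonal_span_pair {u v w : E}
    (hw : w ∈ (Submodule.span 𝕜 {u, v})ᗮ) : ⟪u, w⟫_𝕜 = 0 ∧ ⟪v, w⟫_𝕜 = 0 :=
  ⟨Submodule.inner_right_of_mem_orthogonal (Submodule.subset_span (by simp)) hw,
    Submodule.inner_right_of_mem_orthogonal (Submodule.subset_span (by simp)) hw⟩

variable [FiniteDimensional 𝕜 E]

lemma exists_unit_eigenvector_of_isSymmetric_of_ne_zero {S : E →ₗ[𝕜] E} (hS : S.IsSymmetric)
    (hS0 : S ≠ 0) : ∃ (u : E) (μ : ℝ), ‖u‖ = 1 ∧ μ ≠ 0 ∧ S u = (μ : 𝕜) • u := by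
  obtain ⟨i, hi⟩ : ∃ i, hS.eigenvalues rfl i ≠ 0 := by
    by_contra! h
    exact hS0 ((hS.eigenvectorBasis rfl).toBasis.ext fun i => by simp [h])
  exact ⟨hS.eigenvectorBasis rfl i, hS.eigenvalues rfl i, (hS.eigenvectorBasis rfl).norm_eq_one i,
    hi, hS.apply_eigenvectorBasis rfl i⟩

/-- The conjugate-linear map representing a bilinear form `Θ` through the inner product, that is,
with `⟪rieszMap Θ x, y⟫ = Θ x y`. -/
noncomputable def rieszMap (Θ : E →ₗ[𝕜] E →ₗ[𝕜] 𝕜) : E →ₗ⋆[𝕜] E :=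
  haveI := FiniteDimensional.complete 𝕜 E
  (InnerProductSpace.toDual 𝕜 E).symm.toLinearEquiv.toLinearMap ∘ₛₗ
    (LinearMap.toContinuousLinearMap.toLinearMap ∘ₗ Θ)

section RieszMap

variable {Θ : E →ₗ[𝕜] E →ₗ[𝕜] 𝕜}

lemma inner_rieszMap (x y : E) : ⟪rieszMap Θ x, y⟫_𝕜 = Θ x y := by
  have := FiniteDimensional.complete 𝕜 E
  simp [rieszMap]

lemma inner_neg_rieszMap_rieszMap (hΘ : Θ.IsAlt) (x y : E) :
    ⟪-rieszMap Θ (rieszMap Θ x), y⟫_𝕜 = ⟪rieszMap Θ y, rieszMap Θ x⟫_𝕜 := by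
  rw [inner_neg_left, inner_rieszMap, inner_rieszMap, hΘ.neg]

lemma isSymmetric_neg_rieszMap_comp_rieszMap (hΘ : Θ.IsAlt) :
    (-(rieszMap Θ ∘ₛₗ rieszMap Θ : E →ₗ[𝕜] E)).IsSymmetric := fun x y =>
  calc ⟪-rieszMap Θ (rieszMap Θ x), y⟫_𝕜
      = ⟪rieszMap Θ y, rieszMap Θ x⟫_𝕜 := inner_neg_rieszMap_rieszMap hΘ x y
    _ = conj ⟪-rieszMap Θ (rieszMap Θ y), x⟫_𝕜 := by
      rw [inner_neg_rieszMap_rieszMap hΘ, inner_conj_symm]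
    _ = ⟪x, -rieszMap Θ (rieszMap Θ y)⟫_𝕜 := inner_conj_symm _ _

lemma neg_rieszMap_comp_rieszMap_ne_zero (hΘ : Θ.IsAlt) (hΘ0 : Θ ≠ 0) :
    -(rieszMap Θ ∘ₛₗ rieszMap Θ : E →ₗ[𝕜] E) ≠ 0 := by
  intro h
  have hsq (x : E) : -rieszMap Θ (rieszMap Θ x) = 0 := DFunLike.congr_fun h x
  have hker (x : E) : rieszMap Θ x = 0 := by
    rw [← inner_self_eq_zero (𝕜 := 𝕜), ← inner_neg_rieszMap_rieszMap hΘ, hsq, inner_zero_left]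
  exact hΘ0 (LinearMap.ext₂ fun x y => by simp [← inner_rieszMap, hker])

lemma exists_rieszMap_eq_smul (hΘ : Θ.IsAlt) (hΘ0 : Θ ≠ 0) :
    ∃ (u v : E) (r : ℝ), ‖u‖ = 1 ∧ ‖v‖ = 1 ∧ 0 < r ∧
      rieszMap Θ u = (r : 𝕜) • v ∧ rieszMap Θ v = -((r : 𝕜) • u) := by
  obtain ⟨u, μ, hu, hμ, hSu⟩ := exists_unit_eigenvector_of_isSymmetric_of_ne_zero
    (isSymmetric_neg_rieszMap_comp_rieszMap hΘ) (neg_rieszMap_comp_rieszMap_ne_zero hΘ hΘ0)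
  have hTTu : -rieszMap Θ (rieszMap Θ u) = (μ : 𝕜) • u := hSu
  set r := ‖rieszMap Θ u‖ with hr
  have hμr : (μ : 𝕜) = (r : 𝕜) ^ 2 := by
    rw [← inner_self_eq_norm_sq_to_K, ← inner_neg_rieszMap_rieszMap hΘ, hTTu, inner_smul_left,
      inner_self_eq_norm_sq_to_K, hu]
    simp
  have hr0 : (r : 𝕜) ≠ 0 := by
    intro h
    simp [h, hμ] at hμr
  have hTu0 : rieszMap Θ u ≠ 0 := by simpa [hr] using hr0
  refine ⟨u, (r : 𝕜)⁻¹ • rieszMap Θ u, r, hu, norm_smul_inv_norm hTu0, norm_pos_iff.2 hTu0,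
    (smul_inv_smul₀ hr0 _).symm, ?_⟩
  calc rieszMap Θ ((r : 𝕜)⁻¹ • rieszMap Θ u)
      = -((r : 𝕜)⁻¹ • -rieszMap Θ (rieszMap Θ u)) := by simp [map_smulₛₗ]
    _ = -((r : 𝕜) • u) := by rw [hTTu, hμr, sq, mul_smul, inv_smul_smul₀ hr0]

lemma exists_orthonormal_pair_apply_eq_mul_inner (hΘ : Θ.IsAlt) (hΘ0 : Θ ≠ 0) :
    ∃ (u v : E) (r : ℝ), ‖u‖ = 1 ∧ ‖v‖ = 1 ∧ ⟪u, v⟫_𝕜 = 0 ∧ 0 < r ∧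
      (∀ w, Θ u w = r * ⟪v, w⟫_𝕜) ∧ ∀ w, Θ v w = -(r * ⟪u, w⟫_𝕜) := by
  obtain ⟨u, v, r, hu, hv, hr, hTu, hTv⟩ := exists_rieszMap_eq_smul hΘ hΘ0
  have hΘu (w : E) : Θ u w = r * ⟪v, w⟫_𝕜 := by simp [← inner_rieszMap, hTu, inner_smul_left]
  have hΘv (w : E) : Θ v w = -(r * ⟪u, w⟫_𝕜) := by simp [← inner_rieszMap, hTv, inner_smul_left]
  have huv : ⟪u, v⟫_𝕜 = 0 := by simpa [hΘ.self_eq_zero, hr.ne'] using hΘv v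
  exact ⟨u, v, r, hu, hv, huv, hr, hΘu, hΘv⟩

end RieszMap

lemma finrank_orthogonal_span_pair_add_two {u v : E} (hu : ‖u‖ = 1) (hv : ‖v‖ = 1)
    (huv : ⟪u, v⟫_𝕜 = 0) :
    Module.finrank 𝕜 (Submodule.span 𝕜 {u, v})ᗮ + 2 = Module.finrank 𝕜 E := by
  have huv' : Orthonormal 𝕜 ![u, v] :=
    orthonormal_vecCons_vecCons hu hv huv finZeroElim finZeroElim (by simp [Orthonormal])
  have hspan : Module.finrank 𝕜 (Submodule.span 𝕜 {u, v}) = 2 := by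
    rw [← Matrix.range_cons_cons_empty u v ![], finrank_span_eq_card huv'.linearIndependent,
      Fintype.card_fin]
  rw [← (Submodule.span 𝕜 {u, v}).finrank_add_finrank_orthogonal, hspan, add_comm]

lemma exists_orthonormalBasis_coe_eq_vecCons_vecCons {m : ℕ} {u v : E} (hu : ‖u‖ = 1)
    (hv : ‖v‖ = 1) (huv : ⟪u, v⟫_𝕜 = 0)
    (b : OrthonormalBasis (Fin m) 𝕜 (Submodule.span 𝕜 {u, v})ᗮ) :
    ∃ c : OrthonormalBasis (Fin (m + 2)) 𝕜 E, ⇑c = vecCons u (vecCons v fun i => (b i : E)) := by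
  have hperp (i) : ⟪u, (b i : E)⟫_𝕜 = 0 ∧ ⟪v, (b i : E)⟫_𝕜 = 0 :=
    inner_eq_zero_of_mem_orthogonal_span_pair (b i).2
  have hc : Orthonormal 𝕜 (vecCons u (vecCons v fun i => (b i : E))) :=
    orthonormal_vecCons_vecCons hu hv huv (fun i => (hperp i).1) (fun i => (hperp i).2)
      (b.orthonormal.comp_linearIsometry (Submodule.subtypeₗᵢ _))
  have hcard : Fintype.card (Fin (m + 2)) = Module.finrank 𝕜 E := by
    rw [← finrank_orthogonal_span_pair_add_two hu hv huv, Module.finrank_eq_card_basis b.toBasis]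
    simp
  exact ⟨.mk hc (hc.linearIndependent.span_eq_top_of_card_eq_finrank' hcard).ge,
    OrthonormalBasis.coe_mk _ _⟩

theorem exists_orthonormalBasis_apply_eq_skewBlockMatrix {Θ : E →ₗ[𝕜] E →ₗ[𝕜] 𝕜} (hΘ : Θ.IsAlt)
    {n : ℕ} (hn : Module.finrank 𝕜 E = n) :
    ∃ (b : OrthonormalBasis (Fin n) 𝕜 E) (lam : ℕ → ℝ),
      (∀ l, 0 ≤ lam l) ∧ (∀ l, n / 2 ≤ l → lam l = 0) ∧
      ∀ i j, Θ (b i) (b j) = skewBlockMatrix n (fun l => (lam l : 𝕜)) i j := by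
  induction n using Nat.strong_induction_on generalizing E with
  | _ n ih =>
    rcases eq_or_ne Θ 0 with rfl | hΘ0
    · exact ⟨(stdOrthonormalBasis 𝕜 E).reindex (finCongr hn), 0, fun _ => le_rfl,
        fun _ _ => rfl, by simp [skewBlockMatrix_zero]⟩
    obtain ⟨u, v, r, hu, hv, huv, hr, hΘu, hΘv⟩ := exists_orthonormal_pair_apply_eq_mul_inner hΘ hΘ0
    set K := (Submodule.span 𝕜 {u, v})ᗮ
    obtain ⟨m, hm⟩ : ∃ m, Module.finrank 𝕜 K = m := ⟨_, rfl⟩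
    obtain rfl : m + 2 = n := by
      rw [← hn, ← hm, finrank_orthogonal_span_pair_add_two hu hv huv]
    obtain ⟨b, lam, hlam, hlam0, hb⟩ :=
      ih m (by omega) (Θ := Θ.domRestrict₁₂ K K) (fun x => hΘ x) hm
    obtain ⟨c, hc⟩ := exists_orthonormalBasis_coe_eq_vecCons_vecCons hu hv huv b
    refine ⟨c, fun | 0 => r | l + 1 => lam l, ?_, ?_, ?_⟩
    · rintro (_ | l)
      exacts [hr.le, hlam l]
    · rintro (_ | l) hl
      exacts [by omega, hlam0 l (by omega)]
    · have hΘuv : Θ u v = r := by simp [hΘu, hv]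
      have hperp (i) : ⟪u, (b i : E)⟫_𝕜 = 0 ∧ ⟪v, (b i : E)⟫_𝕜 = 0 :=
        inner_eq_zero_of_mem_orthogonal_span_pair (b i).2
      have hΘub (i) : Θ u (b i) = 0 := by rw [hΘu, (hperp i).2, mul_zero]
      have hΘvb (i) : Θ v (b i) = 0 := by rw [hΘv, (hperp i).1, mul_zero, neg_zero]
      rw [hc]
      exact apply_vecCons_vecCons_eq_skewBlockMatrix hΘ hΘuv hΘub hΘvb hb

end InnerProductSpace

lemma isAlt_toLinearMap₂_of_transpose_eq_neg {R M ι : Type*} [CommRing R] [NoZeroDivisors R]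
    [CharZero R] [AddCommMonoid M] [Module R M] [Fintype ι] [DecidableEq ι] (b : Module.Basis ι R M)
    {A : Matrix ι ι R} (hA : Aᵀ = -A) : (Matrix.toLinearMap₂ b b A).IsAlt := by
  have happly (i j) : Matrix.toLinearMap₂ b b A (b i) (b j) = A i j := by
    rw [← LinearMap.toMatrix₂_apply, LinearMap.toMatrix₂_toLinearMap₂]
  refine LinearMap.isAlt_iff_eq_neg_flip.2 (LinearMap.ext_basis b b fun i j => ?_)
  rw [LinearMap.neg_apply, LinearMap.neg_apply, LinearMap.flip_apply, happly, happly]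
  exact congr_fun₂ hA j i

theorem skew_symmetric_unitary_normal_form_general {𝕜 : Type*} [RCLike 𝕜] (n : ℕ)
    (A : Matrix (Fin n) (Fin n) 𝕜) (hA : Aᵀ = -A) :
    ∃ U ∈ Matrix.unitaryGroup (Fin n) 𝕜, ∃ (k : ℕ) (lam : ℕ → ℝ),
      2 * k ≤ n ∧ (∀ i, 0 ≤ lam i) ∧ (∀ i, k ≤ i → lam i = 0) ∧
      Uᵀ * A * U = skewBlockMatrix n fun i => (lam i : 𝕜) := by
  let e := EuclideanSpace.basisFun (Fin n) 𝕜
  let Θ := Matrix.toLinearMap₂ e.toBasis e.toBasis A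
  obtain ⟨b, lam, hlam, hlam0, hb⟩ := exists_orthonormalBasis_apply_eq_skewBlockMatrix (Θ := Θ)
    (isAlt_toLinearMap₂_of_transpose_eq_neg e.toBasis hA) finrank_euclideanSpace_fin
  refine ⟨e.toBasis.toMatrix b.toBasis, e.toMatrix_orthonormalBasis_mem_unitary b, n / 2, lam,
    Nat.mul_div_le n 2, hlam, hlam0, ?_⟩
  calc (e.toBasis.toMatrix b.toBasis)ᵀ * A * e.toBasis.toMatrix b.toBasis
      = LinearMap.toMatrix₂ b.toBasis b.toBasis Θ := by
        rw [← LinearMap.toMatrix₂_mul_basis_toMatrix e.toBasis e.toBasis,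
          LinearMap.toMatrix₂_toLinearMap₂]
    _ = skewBlockMatrix n fun i => (lam i : 𝕜) := by
        ext i j
        simpa using hb i j

/-- Normal form for complex skew-symmetric matrices (Youla/Hua): if
`Aᵀ = −A`, there are a unitary matrix `U`, a natural number `k` with
`2k ≤ n`, and nonnegative reals `λ₀, …, λ_{k−1}` such that `Uᵀ A U` is
block-diagonal with `2×2` blocks `[[0, λᵢ], [−λᵢ, 0]]` followed by a zero
block.  (The entry in position `(i, j)` is `λ_{i/2}` if `j = i + 1` with `i`
even, `−λ_{j/2}` if `i = j + 1` with `j` even, and `0` otherwise.) -/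
theorem skew_symmetric_unitary_normal_form
    (n : ℕ) (A : Matrix (Fin n) (Fin n) ℂ) (hA : Aᵀ = -A) :
    ∃ U ∈ Matrix.unitaryGroup (Fin n) ℂ, ∃ (k : ℕ) (lam : ℕ → ℝ),
      2 * k ≤ n ∧ (∀ i, 0 ≤ lam i) ∧ (∀ i, k ≤ i → lam i = 0) ∧
      Uᵀ * A * U = Matrix.of (fun i j : Fin n =>
        if i.1 + 1 = j.1 ∧ i.1 % 2 = 0 then (lam (i.1 / 2) : ℂ)
        else if j.1 + 1 = i.1 ∧ j.1 % 2 = 0 then -(lam (j.1 / 2) : ℂ)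
        else 0) :=
  skew_symmetric_unitary_normal_form_general n A hA
end
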